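/- arXiv:2502.05939 — 3 statements merged into one kernel-verified Lean document; each statement's English description precedes it below -/
import Mathlib

section
/- Every finite poset of width at most two on n elements is isomorphic to a permutation poset: if P is a finite poset with n elements in which every antichain has at most two elements, then there exists σ ∈ S_n such that P is order-isomorphic to P_σ. -/
/-!
A finite poset of width at most `k` is the intersection of `k` linear orders; for `k = 2`, numbering
the elements along the two linear orders gives the permutation.

By Dilworth's theorem the poset is a union of `k` chains. The proof is Galvin's induction: remove a
maximal element `a` and colour the rest by `k` chains. In each colour take the greatest element
lying on an antichain of size `k`; these elements form an antichain, so one of them, `x`, is below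
`a`. The chain consisting of `a` and the elements of the colour of `x` below `x` meets every
antichain of size `k`, so its complement has width at most `k - 1`. If the rest contains no
antichain of size `k`, the chain `{a}` has the same property.

For each chain there is a linear extension of the order in which every element `c` of the chain
lies above all elements that were not already above `c`. If `a ≰ b`, the linear extension belonging
to the chain of `a` puts `b` strictly below `a`, so these `k` linear extensions intersect in the
original order.
-/

/-- An antichain of exactly `k` elements inside the finite set `s`; the analogue of
`SimpleGraph.IsNClique`, with the ambient set explicit because Dilworth's theorem is proved by
induction on it. -/
structure IsNAntichain {α : Type*} [LE α] (s : Finset α) (k : ℕ) (A : Finset α) : Prop where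
  subset : A ⊆ s
  isAntichain : IsAntichain (· ≤ ·) (A : Set α)
  card_eq : A.card = k

/-- A colouring of `s` by colours in `I` whose colour classes are chains, that is, a partition of
`s` into at most `I.card` chains. The values of `f` outside `s` are irrelevant. -/
structure IsChainColoring {α ι : Type*} [LE α] (s : Finset α) (I : Finset ι) (f : α → ι) :
    Prop where
  mapsTo : Set.MapsTo f s I
  le_or_le : ∀ ⦃a⦄, a ∈ s → ∀ ⦃b⦄, b ∈ s → f a = f b → a ≤ b ∨ b ≤ a

theorem IsNAntichain.of_subset {α : Type*} [LE α] {s t A : Finset α} {k : ℕ}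
    (hA : IsNAntichain s k A) (hAt : A ⊆ t) : IsNAntichain t k A :=
  ⟨hAt, hA.isAntichain, hA.card_eq⟩

section Dilworth

variable {α ι : Type*} {s A K : Finset α} {I : Finset ι} {f : α → ι} {a : α}

theorem IsChainColoring.injOn_of_isAntichain [LE α] (hf : IsChainColoring s I f) (hAs : A ⊆ s)
    (hA : IsAntichain (· ≤ ·) (A : Set α)) : Set.InjOn f A := by
  intro x hx y hy hxy
  rcases hf.le_or_le (hAs hx) (hAs hy) hxy with h | h
  · exact hA.eq hx hy h
  · exact hA.eq' hx hy h

theorem IsChainColoring.surjOn_of_isNAntichain [LE α] (hf : IsChainColoring s I f)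
    (hA : IsNAntichain s I.card A) : Set.SurjOn f A I :=
  Finset.surjOn_of_injOn_of_card_le f (hf.mapsTo.mono_left hA.subset)
    (hf.injOn_of_isAntichain hA.subset hA.isAntichain) hA.card_eq.ge

variable [Preorder α]

theorem IsChainColoring.exists_greatest_of_color (hf : IsChainColoring s I f)
    (hA : IsNAntichain s I.card A) {i : ι} (hi : i ∈ I) :
    ∃ x, f x = i ∧ (∃ B, IsNAntichain s I.card B ∧ x ∈ B) ∧
      ∀ B, IsNAntichain s I.card B → ∀ y ∈ B, f y = i → y ≤ x := by
  classical
  let U := s.filter fun x => f x = i ∧ ∃ B, IsNAntichain s I.card B ∧ x ∈ B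
  have mem_U : ∀ {B y}, IsNAntichain s I.card B → y ∈ B → f y = i → y ∈ U := fun hB hy hyi =>
    Finset.mem_filter.mpr ⟨hB.subset hy, hyi, _, hB, hy⟩
  obtain ⟨y, hyA, hyi⟩ := hf.surjOn_of_isNAntichain hA hi
  obtain ⟨x, hxU, hxmax⟩ := U.exists_maximal ⟨y, mem_U hA hyA hyi⟩
  obtain ⟨hxs, hxi, hxB⟩ := Finset.mem_filter.mp hxU
  refine ⟨x, hxi, hxB, fun B hB z hz hzi => ?_⟩
  exact (hf.le_or_le (hB.subset hz) hxs (hzi.trans hxi.symm)).elim id (hxmax (mem_U hB hz hzi))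

theorem IsChainColoring.exists_top_isNAntichain (hf : IsChainColoring s I f)
    (hA : IsNAntichain s I.card A) :
    ∃ T, IsNAntichain s I.card T ∧
      ∀ x ∈ T, ∀ B, IsNAntichain s I.card B → ∀ y ∈ B, f y = f x → y ≤ x := by
  classical
  choose x hxi hxB hxtop using fun i : I => hf.exists_greatest_of_color hA i.2
  have x_injective : Function.Injective x := fun i j hij =>
    Subtype.ext ((hxi i).symm.trans ((congrArg f hij).trans (hxi j)))
  refine ⟨Finset.univ.image x, ⟨?_, ?_, ?_⟩, ?_⟩
  · refine Finset.image_subset_iff.mpr fun i _ => ?_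
    obtain ⟨B, hB, hxiB⟩ := hxB i
    exact hB.subset hxiB
  · rw [Finset.coe_image, Finset.coe_univ, Set.image_univ]
    rintro _ ⟨i, rfl⟩ _ ⟨j, rfl⟩ hne hle
    -- The antichain through `x j` also has an element of colour `i`, and it lies below `x i`.
    obtain ⟨B, hB, hxjB⟩ := hxB j
    obtain ⟨y, hyB, hyi⟩ := hf.surjOn_of_isNAntichain hB i.2
    have hyx : y = x j :=
      hB.isAntichain.eq hyB hxjB ((hxtop i B hB y hyB hyi).trans hle)
    have hij : i = j := Subtype.ext (by rw [← hyi, hyx, hxi])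
    exact hne (congrArg x hij)
  · rw [Finset.card_image_of_injective _ x_injective, Finset.card_univ, Fintype.card_coe]
  · intro _ hx B hB y hyB hy
    obtain ⟨i, -, rfl⟩ := Finset.mem_image.mp hx
    exact hxtop i B hB y hyB (hy.trans (hxi i))

theorem IsNAntichain.exists_le_of_maximal [DecidableEq α] {k : ℕ} (hA : IsNAntichain s k A)
    (has : a ∉ s) (hmax : Maximal (· ∈ insert a s) a)
    (hfree : ∀ B, ¬ IsNAntichain (insert a s) (k + 1) B) : ∃ x ∈ A, x ≤ a := by
  by_contra! hle
  refine hfree (insert a A) ⟨Finset.insert_subset_insert a hA.subset, ?_, ?_⟩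
  · rw [Finset.coe_insert]
    exact hA.isAntichain.insert (fun x hx _ => hle x hx) fun x hx _ hax =>
      hle x hx (hmax.2 (Finset.mem_insert_of_mem (hA.subset hx)) hax)
  · rw [Finset.card_insert_of_notMem (fun h => has (hA.subset h)), hA.card_eq]

theorem IsChainColoring.exists_isChain_not_disjoint [DecidableEq α] (hf : IsChainColoring s I f)
    (has : a ∉ s) (hmax : Maximal (· ∈ insert a s) a)
    (hfree : ∀ B, ¬ IsNAntichain (insert a s) (I.card + 1) B) :
    ∃ K : Finset α, a ∈ K ∧ IsChain (· ≤ ·) (K : Set α) ∧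
      ∀ B, IsNAntichain (insert a s) I.card B → ¬ Disjoint B K := by
  classical
  have subset_s : ∀ {B}, IsNAntichain (insert a s) I.card B → a ∉ B →
      IsNAntichain s I.card B := fun hB haB =>
    hB.of_subset ((Finset.subset_insert_iff_of_notMem haB).mp hB.subset)
  by_cases hex : ∃ A, IsNAntichain s I.card A
  · obtain ⟨A, hA⟩ := hex
    obtain ⟨T, hT, hTtop⟩ := hf.exists_top_isNAntichain hA
    obtain ⟨x, hxT, hxa⟩ := hT.exists_le_of_maximal has hmax hfree
    refine ⟨insert a (s.filter fun z => f z = f x ∧ z ≤ x), Finset.mem_insert_self _ _, ?_, ?_⟩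
    · rw [Finset.coe_insert, Finset.coe_filter]
      refine IsChain.insert ?_ fun z hz _ => Or.inr (hz.2.2.trans hxa)
      exact fun y hy z hz _ => hf.le_or_le hy.1 hz.1 (hy.2.1.trans hz.2.1.symm)
    · intro B hB
      rw [Finset.not_disjoint_iff]
      by_cases haB : a ∈ B
      · exact ⟨a, haB, Finset.mem_insert_self _ _⟩
      have hBs := subset_s hB haB
      obtain ⟨y, hyB, hyx⟩ := hf.surjOn_of_isNAntichain hBs (hf.mapsTo (hT.subset hxT))
      refine ⟨y, hyB, Finset.mem_insert_of_mem (Finset.mem_filter.mpr ⟨hBs.subset hyB, hyx, ?_⟩)⟩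
      exact hTtop x hxT B hBs y hyB hyx
  · refine ⟨{a}, Finset.mem_singleton_self a, ?_, fun B hB => ?_⟩
    · rw [Finset.coe_singleton]
      exact IsChain.singleton
    · rw [Finset.disjoint_singleton_right, not_not]
      exact by_contra fun haB => hex ⟨B, subset_s hB haB⟩

theorem IsChainColoring.ite_mem_of_sdiff [DecidableEq α] {k : ℕ} {g : α → ℕ}
    (hg : IsChainColoring (s \ K) (Finset.range k) g) (hK : IsChain (· ≤ ·) (K : Set α)) :
    IsChainColoring s (Finset.range (k + 1)) fun z => if z ∈ K then k else g z := by
  have lt_of_notMem : ∀ {z}, z ∈ s → z ∉ K → g z < k := fun hz hzK =>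
    Finset.mem_range.mp (hg.mapsTo (Finset.mem_sdiff.mpr ⟨hz, hzK⟩))
  refine ⟨fun z hz => ?_, fun y hy z hz hyz => ?_⟩
  · by_cases hzK : z ∈ K
    · simp [hzK]
    · simpa [hzK] using (lt_of_notMem hz hzK).le
  · by_cases hyK : y ∈ K <;> by_cases hzK : z ∈ K <;>
      simp only [hyK, hzK, if_true, if_false] at hyz
    · exact hK.total hyK hzK
    · exact absurd hyz (lt_of_notMem hz hzK).ne'
    · exact absurd hyz (lt_of_notMem hy hyK).ne
    · exact hg.le_or_le (Finset.mem_sdiff.mpr ⟨hy, hyK⟩) (Finset.mem_sdiff.mpr ⟨hz, hzK⟩) hyz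

theorem exists_isChainColoring_of_forall_not_isNAntichain (s : Finset α) (k : ℕ)
    (hfree : ∀ B, ¬ IsNAntichain s (k + 1) B) :
    ∃ f : α → ℕ, IsChainColoring s (Finset.range k) f := by
  classical
  induction s using Finset.strongInduction generalizing k with
  | H s ih =>
    obtain rfl | hne := s.eq_empty_or_nonempty
    · exact ⟨fun _ => 0, by simp [Set.MapsTo], by simp⟩
    obtain ⟨a, hmax⟩ := s.exists_maximal hne
    have has : a ∈ s := hmax.1
    obtain _ | k := k
    · exact (hfree {a} ⟨Finset.singleton_subset_iff.mpr has, by simp, rfl⟩).elim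
    obtain ⟨f, hf⟩ := ih _ (Finset.erase_ssubset has) (k + 1) fun B hB =>
      hfree B (hB.of_subset (hB.subset.trans (Finset.erase_subset a s)))
    obtain ⟨K, haK, hK, hmeet⟩ := hf.exists_isChain_not_disjoint (Finset.notMem_erase a s)
      (by rwa [Finset.insert_erase has]) (by rwa [Finset.insert_erase has, Finset.card_range])
    rw [Finset.insert_erase has, Finset.card_range] at hmeet
    have hssub : s \ K ⊂ s := (Finset.ssubset_iff_of_subset Finset.sdiff_subset).mpr
      ⟨a, has, fun h => (Finset.mem_sdiff.mp h).2 haK⟩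
    obtain ⟨g, hg⟩ := ih _ hssub k fun B hB =>
      hmeet B (hB.of_subset (hB.subset.trans Finset.sdiff_subset))
        (Finset.disjoint_of_subset_left hB.subset Finset.sdiff_disjoint)
    exact ⟨_, hg.ite_mem_of_sdiff hK⟩

end Dilworth

section LinearExtension

variable {α ι : Type*} [PartialOrder α]

/-- The order of `α` with each `x ∈ c` raised above every element that is not already above `x`.
No transitive closure is taken, because the relation is already transitive when `c` is a chain. -/
def RaiseLE {α : Type*} [LE α] (c : Set α) (a b : α) : Prop :=
  a ≤ b ∨ ∃ x ∈ c, x ≤ b ∧ ¬ x ≤ a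

theorem isPartialOrder_raiseLE {c : Set α} (hc : IsChain (· ≤ ·) c) :
    IsPartialOrder α (RaiseLE c) where
  refl _ := Or.inl le_rfl
  trans := by
    rintro a b d (hab | ⟨x, hx, hxb, hxa⟩) (hbd | ⟨y, hy, hyd, hyb⟩)
    · exact Or.inl (hab.trans hbd)
    · exact Or.inr ⟨y, hy, hyd, fun hya => hyb (hya.trans hab)⟩
    · exact Or.inr ⟨x, hx, hxb.trans hbd, hxa⟩
    · have hxy : x ≤ y := (hc.total hx hy).resolve_right fun hyx => hyb (hyx.trans hxb)
      exact Or.inr ⟨x, hx, hxy.trans hyd, hxa⟩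
  antisymm := by
    rintro a b (hab | ⟨x, hx, hxb, hxa⟩) (hba | ⟨y, hy, hya, hyb⟩)
    · exact hab.antisymm hba
    · exact absurd (hya.trans hab) hyb
    · exact absurd (hxb.trans hba) hxa
    · rcases hc.total hx hy with hxy | hyx
      · exact absurd (hxy.trans hya) hxa
      · exact absurd (hyx.trans hxb) hyb

theorem exists_isLinearOrder_of_isChain {c : Set α} (hc : IsChain (· ≤ ·) c) :
    ∃ r : α → α → Prop, IsLinearOrder α r ∧ (∀ a b, a ≤ b → r a b) ∧
      ∀ a ∈ c, ∀ b, ¬ a ≤ b → r b a := by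
  have := isPartialOrder_raiseLE hc
  obtain ⟨r, hr, hle⟩ := extend_partialOrder (RaiseLE c)
  exact ⟨r, hr, fun a b hab => hle a b (Or.inl hab),
    fun a ha b hab => hle b a (Or.inr ⟨a, ha, le_rfl, hab⟩)⟩

theorem exists_isLinearOrder_le_iff_forall {f : α → ι}
    (hf : ∀ i, IsChain (· ≤ ·) (f ⁻¹' {i})) :
    ∃ r : ι → α → α → Prop, (∀ i, IsLinearOrder α (r i)) ∧ ∀ a b, a ≤ b ↔ ∀ i, r i a b := by
  choose r hr hle hraise using fun i => exists_isLinearOrder_of_isChain (hf i)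
  refine ⟨r, hr, fun a b => ⟨fun hab i => hle i a b hab, fun hab => ?_⟩⟩
  by_contra hnle
  have hba : r (f a) b a := hraise (f a) a rfl b hnle
  exact hnle (antisymm_of (r (f a)) (hab (f a)) hba).le

end LinearExtension

theorem exists_equiv_fin_of_isLinearOrder {α : Type*} [Fintype α] {n : ℕ}
    (hcard : Fintype.card α = n) (r : α → α → Prop) [IsLinearOrder α r] :
    ∃ e : α ≃ Fin n, ∀ a b, e a ≤ e b ↔ r a b := by
  let _ : LinearOrder α :=
    { le := r
      le_refl := refl_of r
      le_trans := fun _ _ _ => trans_of r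
      le_antisymm := fun _ _ => antisymm_of r
      le_total := total_of r
      toDecidableLE := Classical.decRel r }
  let e := (Fintype.orderIsoFinOfCardEq α hcard).symm
  exact ⟨e.toEquiv, fun _ _ => e.le_iff_le⟩

theorem width_two_poset_is_permutation_poset_general (k n : ℕ) (α : Type*) [Fintype α]
    [PartialOrder α] (hcard : Fintype.card α = n)
    (hwidth : ∀ A : Finset α, IsAntichain (· ≤ ·) (A : Set α) → A.card ≤ k) :
    ∃ e : Fin k → (α ≃ Fin n), ∀ a b : α, a ≤ b ↔ ∀ i, e i a ≤ e i b := by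
  have hfree : ∀ B, ¬ IsNAntichain (Finset.univ : Finset α) (k + 1) B := fun B hB =>
    (hwidth B hB.isAntichain).not_gt (by rw [hB.card_eq]; exact k.lt_succ_self)
  obtain ⟨f, hf⟩ := exists_isChainColoring_of_forall_not_isNAntichain Finset.univ k hfree
  let color (a : α) : Fin k := ⟨f a, Finset.mem_range.mp (hf.mapsTo (Finset.mem_univ a))⟩
  have isChain_color : ∀ i, IsChain (· ≤ ·) (color ⁻¹' {i}) := fun i a ha b hb _ =>
    hf.le_or_le (Finset.mem_univ a) (Finset.mem_univ b) (congrArg Fin.val (ha.trans hb.symm))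
  obtain ⟨r, hr, hle⟩ := exists_isLinearOrder_le_iff_forall isChain_color
  choose e he using fun i => exists_equiv_fin_of_isLinearOrder hcard (r i)
  exact ⟨e, fun a b => by simp only [hle, he]⟩

/-- Every finite poset of width at most two on `n` elements is isomorphic to a permutation
poset: if every antichain of `P` has at most two elements, then there is `σ ∈ S_n` and a
bijection `e` from `P` to `[n]` such that `a ≤ b` in `P` iff `e a ≤ e b` and
`σ (e a) ≤ σ (e b)` (i.e. `P ≅ P_σ`). -/
theorem width_two_poset_is_permutation_poset (n : ℕ) (α : Type*) [Fintype α]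
    [PartialOrder α] (hcard : Fintype.card α = n)
    (hwidth : ∀ A : Finset α, IsAntichain (· ≤ ·) (A : Set α) → A.card ≤ 2) :
    ∃ (σ : Equiv.Perm (Fin n)) (e : α ≃ Fin n),
      ∀ a b : α, a ≤ b ↔ (e a ≤ e b ∧ σ (e a) ≤ σ (e b)) := by
  obtain ⟨e, he⟩ := width_two_poset_is_permutation_poset_general 2 n α hcard hwidth
  exact ⟨(e 0).symm.trans (e 1), e 0, fun a b => by simp [he, Fin.forall_fin_two]⟩
end

section
/- For the permutation π = [2, 4, 6, 8, 10, 1, 12, 3, 15, 5, 17, 7, 9, 11, 13, 14, 16] ∈ S_17, the descent-generating polynomial of the lower weak-order interval, Q^{π}_W(t) = Σ_{σ ≤_W π} t^{des(σ)}, equals 3t⁸ + 86t⁷ + 658t⁶ + 1946t⁵ + 2534t⁴ + 1420t³ + 336t² + 32t + 1, and this polynomial is not real-rooted. In particular, there exists π ∈ S_17 whose lower weak-order interval has a non-real-rooted descent-generating polynomial. -/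
open Polynomial

/-- One covering step in the (right) weak order: `τ` is obtained from `σ` by swapping the
adjacent entries `σ_i < σ_{i+1}` in one-line notation. -/
def WeakStep {n : ℕ} (σ τ : Equiv.Perm (Fin n)) : Prop :=
  ∃ (i : Fin n) (h : (i : ℕ) + 1 < n),
    σ i < σ ⟨(i : ℕ) + 1, h⟩ ∧ τ = σ * Equiv.swap i ⟨(i : ℕ) + 1, h⟩

/-- The weak order on `S_n`: the partial order generated by the cover relations
given by `WeakStep`. -/
def WeakLE {n : ℕ} (σ π : Equiv.Perm (Fin n)) : Prop :=
  Relation.ReflTransGen WeakStep σ π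

/-- The number of descents of a permutation: indices `i` with `σ_i > σ_{i+1}`. -/
def desCount {n : ℕ} (σ : Equiv.Perm (Fin n)) : ℕ :=
  (Finset.univ.filter fun i : Fin n =>
    ∃ h : (i : ℕ) + 1 < n, σ ⟨(i : ℕ) + 1, h⟩ < σ i).card

open scoped Classical in
/-- The descent-generating polynomial `Q^π_W(t) = Σ_{σ ≤_W π} t^{des(σ)}` of the lower
weak-order interval `[id, π]_W`. -/
noncomputable def weakDesPoly {n : ℕ} (π : Equiv.Perm (Fin n)) : Polynomial ℝ :=
  ∑ σ : Equiv.Perm (Fin n), if WeakLE σ π then X ^ desCount σ else 0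

/-- A real polynomial is real-rooted if it is nonzero and all of its complex roots are real. -/
def RealRooted (p : Polynomial ℝ) : Prop :=
  p ≠ 0 ∧ ∀ z : ℂ, Polynomial.aeval z p = 0 → z.im = 0

/-- The permutation `π = [2, 4, 6, 8, 10, 1, 12, 3, 15, 5, 17, 7, 9, 11, 13, 14, 16] ∈ S_17`
(in 0-based form). -/
noncomputable def pi17 : Equiv.Perm (Fin 17) :=
  Equiv.ofBijective ![1, 3, 5, 7, 9, 0, 11, 2, 14, 4, 16, 6, 8, 10, 12, 13, 15] (by decide)

/-!
A permutation `σ` lies below `π` in the weak order iff every inversion of `σ` is one of `π`, that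
is, iff the one-line notation of `σ` is a linear extension of the poset in which `x ≺ y` when
`x < y` and `π` lists `x` before `y`. For `π = pi17` this poset has width two: it is the union of
the chain of left-to-right maxima of `π` and the chain of the remaining values. Its linear
extensions are therefore shuffles of two chains, and counting these by descents along the
recursion on the first letter gives the polynomial.

If all roots of `p` are real, then moving a complex number to its real part brings it closer to
every root, so `|p (re z)| ≤ |p z|`. This fails at `z = (-11 + i) / 6`.
-/

section WeakOrder

variable {n : ℕ} {σ τ π : Equiv.Perm (Fin n)}

/-- Containment of inversion sets, an inversion being recorded by its two values: any two values
that `σ` lists in decreasing order are listed in the same order by `π`. -/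
def InversionsSubset (σ π : Equiv.Perm (Fin n)) : Prop :=
  ∀ ⦃i j⦄, i < j → σ j < σ i → π.symm (σ i) < π.symm (σ j)

theorem inversionsSubset_refl (σ : Equiv.Perm (Fin n)) : InversionsSubset σ σ := by
  intro i j hij _
  simpa using hij

theorem swap_lt_swap_of_lt {k i j : Fin n} {hk : (k : ℕ) + 1 < n} (hij : i < j)
    (hne : ¬(i = k ∧ j = ⟨k + 1, hk⟩)) :
    Equiv.swap k ⟨k + 1, hk⟩ i < Equiv.swap k ⟨k + 1, hk⟩ j := by
  simp only [Equiv.swap_apply_def]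
  split_ifs <;> simp only [Fin.ext_iff, Fin.lt_def] at * <;> omega

theorem WeakStep.inversionsSubset (hstep : WeakStep σ τ) (hτ : InversionsSubset τ π) :
    InversionsSubset σ π := by
  obtain ⟨k, hk, hlt, rfl⟩ := hstep
  intro i j hij hinv
  have hne : ¬(i = k ∧ j = ⟨k + 1, hk⟩) := by
    rintro ⟨rfl, rfl⟩
    exact hinv.not_gt hlt
  simpa using hτ (swap_lt_swap_of_lt hij hne) (by simpa using hinv)

theorem WeakLE.inversionsSubset (hle : WeakLE σ π) : InversionsSubset σ π := by
  induction hle using Relation.ReflTransGen.head_induction_on with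
  | refl => exact inversionsSubset_refl π
  | head hstep _ ih => exact hstep.inversionsSubset ih

theorem WeakStep.toLex_lt (hstep : WeakStep σ τ) : toLex ⇑σ < toLex ⇑τ := by
  obtain ⟨k, hk, hlt, rfl⟩ := hstep
  have hdesc := Pi.lex_desc (f := ⇑(σ * Equiv.swap k ⟨k + 1, hk⟩)) (i := k) (j := ⟨k + 1, hk⟩)
    (by simp [Fin.le_def]) (by simpa using hlt)
  convert hdesc using 2
  ext i
  simp

theorem exists_adjacent_descent_of_ne_one (hσ : σ ≠ 1) :
    ∃ (k : Fin n) (hk : (k : ℕ) + 1 < n), σ ⟨k + 1, hk⟩ < σ k := by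
  by_contra! hasc
  have hmono : Monotone σ := by
    cases n with
    | zero => exact Subsingleton.monotone _
    | succ n => exact Fin.monotone_iff_le_succ.2 fun i => hasc i.castSucc (by simp)
  have hrefl : (hmono.strictMono_of_injective σ.injective).orderIsoOfSurjective σ σ.surjective =
      OrderIso.refl (Fin n) := Subsingleton.elim _ _
  exact hσ (Equiv.ext fun i => congrArg (fun e : Fin n ≃o Fin n => e i) hrefl)

theorem InversionsSubset.exists_weakStep (hσ : InversionsSubset σ π) (hne : σ ≠ π) :
    ∃ τ, WeakStep σ τ ∧ InversionsSubset τ π := by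
  obtain ⟨k, hk, hdesc⟩ : ∃ (k : Fin n) (hk : (k : ℕ) + 1 < n),
      π.symm (σ ⟨k + 1, hk⟩) < π.symm (σ k) :=
    exists_adjacent_descent_of_ne_one (σ := π⁻¹ * σ) fun h => hne (inv_mul_eq_one.1 h).symm
  have hk_lt : k < ⟨k + 1, hk⟩ := by simp [Fin.lt_def]
  have hasc : σ k < σ ⟨k + 1, hk⟩ :=
    lt_of_le_of_ne (not_lt.1 fun h => (hσ hk_lt h).not_gt hdesc) (σ.injective.ne hk_lt.ne)
  refine ⟨_, ⟨k, hk, hasc, rfl⟩, fun i j hij hinv => ?_⟩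
  by_cases hkij : i = k ∧ j = ⟨k + 1, hk⟩
  · obtain ⟨rfl, rfl⟩ := hkij
    simpa using hdesc
  · exact hσ (swap_lt_swap_of_lt hij hkij) hinv

theorem weakLE_iff_inversionsSubset : WeakLE σ π ↔ InversionsSubset σ π := by
  refine ⟨WeakLE.inversionsSubset, ?_⟩
  have hwf : WellFounded fun τ σ : Equiv.Perm (Fin n) => toLex ⇑σ < toLex ⇑τ :=
    InvImage.wf (fun σ : Equiv.Perm (Fin n) => toLex ⇑σ) wellFounded_gt
  induction σ using hwf.induction with
  | _ σ ih =>
    intro hσ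
    by_cases hne : σ = π
    · exact hne ▸ Relation.ReflTransGen.refl
    · obtain ⟨τ, hstep, hτ⟩ := hσ.exists_weakStep hne
      exact Relation.ReflTransGen.head hstep (ih τ hstep.toLex_lt hτ)

end WeakOrder

section LinearExtensions

variable {α : Type*} {r : α → α → Prop} {a b x : α} {A B S T l : List α}

/-- `l` lists the elements of `S` in an order compatible with the strict order `r`. -/
def IsLinearExtension (r : α → α → Prop) (S l : List α) : Prop :=
  l.Perm S ∧ l.Pairwise fun x y => ¬r y x

theorem isLinearExtension_congr (hST : S.Perm T) :
    IsLinearExtension r S l ↔ IsLinearExtension r T l :=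
  and_congr_left' ⟨fun h => h.trans hST, fun h => h.trans hST.symm⟩

theorem isLinearExtension_cons_iff :
    IsLinearExtension r (a :: S) (a :: l) ↔ (∀ s ∈ S, ¬r s a) ∧ IsLinearExtension r S l := by
  simp only [IsLinearExtension, List.perm_cons, List.pairwise_cons]
  constructor
  · rintro ⟨hperm, hmin, hl⟩
    exact ⟨fun s hs => hmin s (hperm.mem_iff.2 hs), hperm, hl⟩
  · rintro ⟨hmin, hperm, hl⟩
    exact ⟨hperm, fun s hs => hmin s (hperm.mem_iff.1 hs), hl⟩

theorem IsLinearExtension.not_rel_head [Std.Irrefl r] (h : IsLinearExtension r S (x :: l)) :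
    ∀ s ∈ S, ¬r s x := by
  intro s hs
  rcases List.mem_cons.1 (h.1.mem_iff.2 hs) with rfl | hsl
  · exact irrefl s
  · exact (List.pairwise_cons.1 h.2).1 s hsl

theorem isLinearExtension_iff_eq_of_pairwise [Std.Asymm r] (hS : S.Pairwise r) :
    IsLinearExtension r S l ↔ l = S := by
  induction S generalizing l with
  | nil =>
    simp only [IsLinearExtension, List.perm_nil, and_iff_left_iff_imp]
    rintro rfl
    exact List.Pairwise.nil
  | cons a S ih =>
    obtain ⟨haS, hS_tail⟩ := List.pairwise_cons.1 hS
    constructor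
    · intro h
      cases l with
      | nil => exact absurd h.1.symm (List.not_perm_cons_nil)
      | cons x l =>
        have hxa : x = a := (List.mem_cons.1 (h.1.mem_iff.1 List.mem_cons_self)).resolve_right
          fun hxS => h.not_rel_head a List.mem_cons_self (haS x hxS)
        subst hxa
        rw [(ih hS_tail).1 (isLinearExtension_cons_iff.1 h).2]
    · rintro rfl
      exact isLinearExtension_cons_iff.2 ⟨fun s hs => asymm (haS s hs), (ih hS_tail).2 rfl⟩

theorem isLinearExtension_cons_append_cons_iff [IsStrictOrder α r]
    (hA : (a :: A).Pairwise r) (hB : (b :: B).Pairwise r) :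
    IsLinearExtension r (a :: A ++ b :: B) l ↔
      (∃ l', ¬r b a ∧ IsLinearExtension r (A ++ b :: B) l' ∧ a :: l' = l) ∨
        ∃ l', ¬r a b ∧ IsLinearExtension r (a :: A ++ B) l' ∧ b :: l' = l := by
  have haA := (List.pairwise_cons.1 hA).1
  have hbB := (List.pairwise_cons.1 hB).1
  have hmiddle : (a :: A ++ b :: B).Perm (b :: (a :: A ++ B)) := List.perm_middle
  constructor
  · intro h
    cases l with
    | nil => exact absurd h.1.symm List.not_perm_cons_nil
    | cons x l =>
      have hmin := h.not_rel_head
      have hx : x ∈ a :: A ++ b :: B := h.1.mem_iff.1 List.mem_cons_self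
      simp only [List.cons_append, List.mem_cons, List.mem_append] at hx hmin
      obtain rfl | rfl : x = a ∨ x = b := by
        rcases hx with hxa | hxA | hxb | hxB
        · exact Or.inl hxa
        · exact absurd (haA x hxA) (hmin a (by simp))
        · exact Or.inr hxb
        · exact absurd (hbB x hxB) (hmin b (by simp))
      · exact Or.inl ⟨l, hmin b (by simp), (isLinearExtension_cons_iff.1 h).2, rfl⟩
      · exact Or.inr ⟨l, hmin a (by simp),
          (isLinearExtension_cons_iff.1 ((isLinearExtension_congr hmiddle).1 h)).2, rfl⟩
  · rintro (⟨l', hba, hl', rfl⟩ | ⟨l', hab, hl', rfl⟩)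
    · refine isLinearExtension_cons_iff.2 ⟨fun s hs => ?_, hl'⟩
      rcases List.mem_append.1 hs with hsA | hsB
      · exact asymm (haA s hsA)
      · rcases List.mem_cons.1 hsB with rfl | hsB
        · exact hba
        · exact fun hsa => hba (trans_of r (hbB s hsB) hsa)
    · refine (isLinearExtension_congr hmiddle).2
        (isLinearExtension_cons_iff.2 ⟨fun s hs => ?_, hl'⟩)
      rcases List.mem_append.1 hs with hsA | hsB
      · rcases List.mem_cons.1 hsA with rfl | hsA
        · exact hab
        · exact fun hsb => hab (trans_of r (haA s hsA) hsb)
      · exact asymm (hbB s hsB)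

variable [DecidableRel r]

/-- The list of linear extensions of the union of two chains `A` and `B` of a strict order `r`,
each chain being listed increasingly. Since only the heads of the chains can be minimal, a linear
extension starts with one of them. -/
def linearExtensions (r : α → α → Prop) [DecidableRel r] : List α → List α → List (List α)
  | [], B => [B]
  | A, [] => [A]
  | a :: A, b :: B =>
    (if r b a then [] else (linearExtensions r A (b :: B)).map (a :: ·)) ++
      if r a b then [] else (linearExtensions r (a :: A) B).map (b :: ·)
termination_by A B => A.length + B.length

theorem mem_linearExtensions_iff [IsStrictOrder α r] (hA : A.Pairwise r) (hB : B.Pairwise r) :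
    l ∈ linearExtensions r A B ↔ IsLinearExtension r (A ++ B) l := by
  induction A, B using linearExtensions.induct generalizing l with
  | case1 B => simp [linearExtensions, isLinearExtension_iff_eq_of_pairwise hB]
  | case2 A => simp [linearExtensions, isLinearExtension_iff_eq_of_pairwise hA]
  | case3 a A b B ihA ihB =>
    rw [isLinearExtension_cons_append_cons_iff hA hB, linearExtensions]
    simp [ihA hA.tail hB, ihB hA hB.tail]

theorem nodup_linearExtensions (hAB : A.Disjoint B) : (linearExtensions r A B).Nodup := by
  induction A, B using linearExtensions.induct with
  | case1 B => simp [linearExtensions]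
  | case2 A => simp [linearExtensions]
  | case3 a A b B ihA ihB =>
    have hab : a ≠ b := fun h => hAB List.mem_cons_self (h ▸ List.mem_cons_self)
    have hnodupA := ihA (List.disjoint_of_disjoint_cons_left hAB)
    have hnodupB := ihB (List.disjoint_of_disjoint_cons_right hAB)
    rw [linearExtensions, List.nodup_append]
    refine ⟨?_, ?_, ?_⟩
    · split_ifs
      exacts [List.nodup_nil, hnodupA.map List.cons_injective]
    · split_ifs
      exacts [List.nodup_nil, hnodupB.map List.cons_injective]
    · grind

end LinearExtensions

section Descents

variable {α : Type*} [LT α] [DecidableLT α]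

/-- The number of positions of a list at which an entry is followed by a smaller one. -/
def listDescents : List α → ℕ
  | a :: b :: l => (if b < a then 1 else 0) + listDescents (b :: l)
  | _ => 0

theorem listDescents_bot_cons {α : Type*} [Preorder α] [OrderBot α] [DecidableLT α] (l : List α) :
    listDescents (⊥ :: l) = listDescents l := by
  cases l <;> simp [listDescents]

theorem listDescents_ofFn_add_two {n : ℕ} (f : Fin (n + 2) → α) :
    listDescents (List.ofFn f) =
      (if f 1 < f 0 then 1 else 0) + listDescents (List.ofFn fun i => f i.succ) := by
  rw [List.ofFn_succ, List.ofFn_succ (f := fun i => f i.succ)]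
  rfl

theorem listDescents_ofFn {n : ℕ} (f : Fin n → α) :
    listDescents (List.ofFn f) =
      (Finset.univ.filter fun i : Fin n => ∃ h : (i : ℕ) + 1 < n, f ⟨i + 1, h⟩ < f i).card := by
  induction n with
  | zero => simp [listDescents]
  | succ n ih =>
    cases n with
    | zero =>
      have hempty : (Finset.univ.filter fun i : Fin 1 =>
          ∃ h : (i : ℕ) + 1 < 1, f ⟨i + 1, h⟩ < f i) = ∅ :=
        Finset.filter_eq_empty_iff.2 fun i _ ⟨h, _⟩ => by omega
      simp only [hempty, List.ofFn_succ, List.ofFn_zero, listDescents, Finset.card_empty]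
    | succ n =>
      have hhead : (∃ h : ((0 : Fin (n + 2)) : ℕ) + 1 < n + 1 + 1,
          f ⟨(0 : Fin (n + 2)) + 1, h⟩ < f 0) ↔ f 1 < f 0 :=
        ⟨fun ⟨_, hlt⟩ => hlt, fun hlt => ⟨by simp, hlt⟩⟩
      have htail (i : Fin (n + 1)) :
          (∃ h : (i.succ : ℕ) + 1 < n + 1 + 1, f ⟨i.succ + 1, h⟩ < f i.succ) ↔
            ∃ h : (i : ℕ) + 1 < n + 1, f (Fin.succ ⟨i + 1, h⟩) < f i.succ :=
        ⟨fun ⟨h, hlt⟩ => ⟨Nat.lt_of_succ_lt_succ h, hlt⟩,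
          fun ⟨h, hlt⟩ => ⟨Nat.succ_lt_succ h, hlt⟩⟩
      rw [listDescents_ofFn_add_two, Fin.card_filter_univ_succ, ih]
      simp only [hhead, htail]
      split_ifs <;> omega

theorem desCount_eq_listDescents {n : ℕ} (σ : Equiv.Perm (Fin n)) :
    desCount σ = listDescents (List.ofFn σ) :=
  (listDescents_ofFn σ).symm

end Descents

section DescentCoeffs

/-- Entrywise sum of two coefficient lists, the shorter one being padded with zeros. -/
def addCoeffs : List ℕ → List ℕ → List ℕ
  | [], w => w
  | v, [] => v
  | c :: v, d :: w => (c + d) :: addCoeffs v w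

theorem ofDigits_addCoeffs {R : Type*} [Semiring R] (x : R) (v w : List ℕ) :
    Nat.ofDigits x (addCoeffs v w) = Nat.ofDigits x v + Nat.ofDigits x w := by
  induction v, w using addCoeffs.induct with
  | case1 w => simp [addCoeffs, Nat.ofDigits]
  | case2 v => simp [addCoeffs, Nat.ofDigits]
  | case3 c v d w ih =>
    simp only [addCoeffs, Nat.ofDigits, ih, Nat.cast_add, mul_add]
    abel

theorem ofDigits_replicate_zero_append_one {R : Type*} [Semiring R] (x : R) (d : ℕ) :
    Nat.ofDigits x (List.replicate d 0 ++ [1]) = x ^ d := by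
  induction d with
  | zero => simp [Nat.ofDigits]
  | succ d ih => simp [List.replicate_succ, Nat.ofDigits, ih, pow_succ']

variable {α : Type*} [LT α] [DecidableLT α] (r : α → α → Prop) [DecidableRel r]

/-- The list whose `k`-th entry is the number of linear extensions `l` of the union of the chains
`A` and `B` such that `p :: l` has `k` descents. -/
def descentCoeffs (p : α) : List α → List α → List ℕ
  | [], B => List.replicate (listDescents (p :: B)) 0 ++ [1]
  | A, [] => List.replicate (listDescents (p :: A)) 0 ++ [1]
  | a :: A, b :: B =>
    addCoeffs
      (if r b a then [] else
        if a < p then 0 :: descentCoeffs a A (b :: B) else descentCoeffs a A (b :: B))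
      (if r a b then [] else
        if b < p then 0 :: descentCoeffs b (a :: A) B else descentCoeffs b (a :: A) B)
termination_by A B => A.length + B.length

theorem ofDigits_cons_descents {R : Type*} [Semiring R] {x : R} {a p : α}
    {L : List (List α)} {w : List ℕ}
    (hw : Nat.ofDigits x w = (L.map fun l => x ^ listDescents (a :: l)).sum) :
    Nat.ofDigits x (if a < p then 0 :: w else w) =
      ((L.map (a :: ·)).map fun l => x ^ listDescents (p :: l)).sum := by
  simp only [List.map_map, Function.comp_def, listDescents]
  split_ifs
  · simp [Nat.ofDigits, hw, pow_add, List.sum_map_mul_left]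
  · simp [hw]

theorem ofDigits_descentCoeffs {R : Type*} [Semiring R] (x : R) (p : α) (A B : List α) :
    Nat.ofDigits x (descentCoeffs r p A B) =
      ((linearExtensions r A B).map fun l => x ^ listDescents (p :: l)).sum := by
  induction p, A, B using descentCoeffs.induct with
  | case1 p B => simp [descentCoeffs, linearExtensions, ofDigits_replicate_zero_append_one]
  | case2 p A => simp [descentCoeffs, linearExtensions, ofDigits_replicate_zero_append_one]
  | case3 p a A b B ihA ihB =>
    rw [descentCoeffs, linearExtensions, ofDigits_addCoeffs, List.map_append, List.sum_append]
    congr 1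
    · by_cases hba : r b a
      · simp [hba, Nat.ofDigits]
      · simp only [if_neg hba, ofDigits_cons_descents ihA]
    · by_cases hab : r a b
      · simp [hab, Nat.ofDigits]
      · simp only [if_neg hab, ofDigits_cons_descents ihB]

end DescentCoeffs

section Noninversions

/-- The order whose linear extensions, for `q = π⁻¹`, are the one-line notations of the
permutations below `π` in the weak order: `x` precedes `y` if `x < y` and `q` assigns `x` the
smaller position. -/
def Noninversion {α β : Type*} [LT α] [LT β] (q : α → β) (x y : α) : Prop :=
  x < y ∧ q x < q y

instance {α β : Type*} [LT α] [LT β] [DecidableLT α] [DecidableLT β] (q : α → β) :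
    DecidableRel (Noninversion q) :=
  fun _ _ => inferInstanceAs (Decidable (_ ∧ _))

instance {α β : Type*} [Preorder α] [Preorder β] (q : α → β) :
    IsStrictOrder α (Noninversion q) where
  irrefl _ h := lt_irrefl _ h.1
  trans _ _ _ h h' := ⟨h.1.trans h'.1, h.2.trans h'.2⟩

variable {n : ℕ}

theorem inversionsSubset_iff_isLinearExtension {σ π : Equiv.Perm (Fin n)} :
    InversionsSubset σ π ↔
      IsLinearExtension (Noninversion π.symm) (List.finRange n) (List.ofFn σ) := by
  have hperm : (List.ofFn σ).Perm (List.finRange n) := by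
    simpa [List.ofFn_id] using Equiv.Perm.ofFn_comp_perm σ id
  simp only [IsLinearExtension, hperm, true_and, List.pairwise_ofFn, Noninversion, not_and, not_lt]
  refine forall₂_congr fun i j => forall₂_congr fun hij _ => ?_
  exact (π.symm.injective.ne (σ.injective.ne hij.ne)).le_iff_lt.symm

theorem exists_perm_ofFn_eq {l : List (Fin n)} (hl : l.Perm (List.finRange n)) :
    ∃ σ : Equiv.Perm (Fin n), List.ofFn σ = l := by
  have hlength : l.length = n := by simpa using hl.length_eq
  have hnodup : l.Nodup := hl.nodup_iff.2 (List.nodup_finRange n)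
  refine ⟨(finCongr hlength.symm).trans
    (hnodup.getEquivOfForallMemList l fun x => hl.mem_iff.2 (List.mem_finRange x)), ?_⟩
  conv_rhs => rw [← List.ofFn_get l, List.ofFn_congr hlength]
  rfl

theorem weakDesPoly_eq_sum_linearExtensions {π : Equiv.Perm (Fin n)} {A B : List (Fin n)}
    (hA : A.Pairwise (Noninversion π.symm)) (hB : B.Pairwise (Noninversion π.symm))
    (hAB : (A ++ B).Perm (List.finRange n)) :
    weakDesPoly π =
      ((linearExtensions (Noninversion π.symm) A B).map fun l => X ^ listDescents l).sum := by
  classical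
  have hmem (l : List (Fin n)) : l ∈ linearExtensions (Noninversion π.symm) A B ↔
      IsLinearExtension (Noninversion π.symm) (List.finRange n) l :=
    (mem_linearExtensions_iff hA hB).trans (isLinearExtension_congr hAB)
  have hdisj : A.Disjoint B :=
    List.disjoint_of_nodup_append (hAB.nodup_iff.2 (List.nodup_finRange n))
  rw [weakDesPoly, ← Finset.sum_filter, ← List.sum_toFinset _ (nodup_linearExtensions hdisj)]
  refine Finset.sum_bij (fun σ _ => List.ofFn σ) (fun σ hσ => ?_)
    (fun σ _ τ _ h => DFunLike.coe_injective (List.ofFn_injective h)) (fun l hl => ?_)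
    fun σ _ => by rw [desCount_eq_listDescents]
  · rw [List.mem_toFinset, hmem, ← inversionsSubset_iff_isLinearExtension,
      ← weakLE_iff_inversionsSubset]
    exact (Finset.mem_filter.1 hσ).2
  · rw [List.mem_toFinset, hmem] at hl
    obtain ⟨σ, rfl⟩ := exists_perm_ofFn_eq hl.1
    rw [← inversionsSubset_iff_isLinearExtension, ← weakLE_iff_inversionsSubset] at hl
    exact ⟨σ, Finset.mem_filter.2 ⟨Finset.mem_univ σ, hl⟩, rfl⟩

theorem weakDesPoly_eq_ofDigits_descentCoeffs [NeZero n] {π : Equiv.Perm (Fin n)}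
    {A B : List (Fin n)}
    (hA : A.Pairwise (Noninversion π.symm)) (hB : B.Pairwise (Noninversion π.symm))
    (hAB : (A ++ B).Perm (List.finRange n)) :
    weakDesPoly π = Nat.ofDigits X (descentCoeffs (Noninversion π.symm) ⊥ A B) := by
  simp only [ofDigits_descentCoeffs, listDescents_bot_cons,
    weakDesPoly_eq_sum_linearExtensions hA hB hAB]

end Noninversions

section Pi17

/-- The inverse of `pi17` as an explicit table; unlike `pi17.symm`, which comes from
`Equiv.ofBijective`, it can be evaluated. -/
def pi17Inv : Fin 17 → Fin 17 :=
  ![5, 0, 7, 1, 9, 2, 11, 3, 12, 4, 13, 6, 14, 15, 8, 16, 10]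

theorem coe_pi17_symm : ⇑pi17.symm = pi17Inv := by
  have hinv : ∀ x,
      ![1, 3, 5, 7, 9, 0, 11, 2, 14, 4, 16, 6, 8, 10, 12, 13, 15] (pi17Inv x) = x := by
    decide
  exact funext fun x => pi17.symm_apply_eq.2 (hinv x).symm

/-- The left-to-right maxima of `pi17`. -/
def pi17Records : List (Fin 17) := [1, 3, 5, 7, 9, 11, 14, 16]

/-- The values of `pi17` that are not left-to-right maxima. -/
def pi17NonRecords : List (Fin 17) := [0, 2, 4, 6, 8, 10, 12, 13, 15]

theorem pairwise_pi17Records : pi17Records.Pairwise (Noninversion pi17.symm) := by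
  rw [coe_pi17_symm]
  decide

theorem pairwise_pi17NonRecords : pi17NonRecords.Pairwise (Noninversion pi17.symm) := by
  rw [coe_pi17_symm]
  decide

theorem pi17Records_append_perm : (pi17Records ++ pi17NonRecords).Perm (List.finRange 17) := by
  decide

theorem descentCoeffs_pi17 :
    descentCoeffs (Noninversion pi17Inv) ⊥ pi17Records pi17NonRecords =
      [1, 32, 336, 1420, 2534, 1946, 658, 86, 3] := by
  decide +kernel

theorem weakDesPoly_pi17_eq :
    weakDesPoly pi17 =
      C 3 * X ^ 8 + C 86 * X ^ 7 + C 658 * X ^ 6 + C 1946 * X ^ 5 + C 2534 * X ^ 4 +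
        C 1420 * X ^ 3 + C 336 * X ^ 2 + C 32 * X + 1 := by
  have hpoly := weakDesPoly_eq_ofDigits_descentCoeffs pairwise_pi17Records
    pairwise_pi17NonRecords pi17Records_append_perm
  simp only [coe_pi17_symm, descentCoeffs_pi17] at hpoly
  rw [hpoly]
  simp only [Nat.ofDigits, C_ofNat, Nat.cast_ofNat, Nat.cast_one]
  ring

end Pi17

section RealRooted

theorem norm_eval_eq_of_splits {K : Type*} [NormedField K] {p : K[X]} (hp : p.Splits) (z : K) :
    ‖p.eval z‖ = ‖p.leadingCoeff‖ * (p.roots.map fun w => ‖z - w‖).prod := by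
  rw [hp.eval_eq_prod_roots, norm_mul]
  congr 1
  simpa using map_multiset_prod (normHom : K →*₀ ℝ) (p.roots.map fun w => z - w)

theorem RealRooted.norm_aeval_re_le {p : ℝ[X]} (hp : RealRooted p) (z : ℂ) :
    ‖aeval (z.re : ℂ) p‖ ≤ ‖aeval z p‖ := by
  have hsplits := IsAlgClosed.splits (p.map (algebraMap ℝ ℂ))
  rw [← eval_map_algebraMap, ← eval_map_algebraMap, norm_eval_eq_of_splits hsplits,
    norm_eval_eq_of_splits hsplits]
  gcongr
  refine Multiset.prod_map_le_prod_map₀ _ _ (fun _ _ => norm_nonneg _) fun w hw => ?_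
  have hw_root : aeval w p = 0 := by
    rw [← eval_map_algebraMap]
    exact (mem_roots'.1 hw).2
  have hre : (z.re : ℂ) - w = ((z - w).re : ℂ) :=
    Complex.ext (by simp) (by simp [hp.2 w hw_root])
  rw [hre, Complex.norm_real]
  exact Complex.abs_re_le_norm _

theorem not_realRooted_pi17 :
    ¬ RealRooted (C 3 * X ^ 8 + C 86 * X ^ 7 + C 658 * X ^ 6 + C 1946 * X ^ 5 +
        C 2534 * X ^ 4 + C 1420 * X ^ 3 + C 336 * X ^ 2 + C 32 * X + 1) := by
  intro h
  have hle := h.norm_aeval_re_le ⟨-11 / 6, 1 / 6⟩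
  set p : ℝ[X] := C 3 * X ^ 8 + C 86 * X ^ 7 + C 658 * X ^ 6 + C 1946 * X ^ 5 +
        C 2534 * X ^ 4 + C 1420 * X ^ 3 + C 336 * X ^ 2 + C 32 * X + 1 with hp
  have hre : aeval ((-11 / 6 : ℝ) : ℂ) p = (14024741 / 559872 : ℝ) := by
    simp [hp]; norm_num
  have hz : aeval (⟨-11 / 6, 1 / 6⟩ : ℂ) p = ⟨-17207 / 11664, 187217 / 17496⟩ := by
    apply Complex.ext <;> simp [hp, pow_succ] <;> norm_num
  rw [hre, hz, ← sq_le_sq₀ (norm_nonneg _) (norm_nonneg _), Complex.sq_norm, Complex.sq_norm] at hle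
  norm_num [Complex.normSq_apply] at hle

end RealRooted

/-- For `π = [2, 4, 6, 8, 10, 1, 12, 3, 15, 5, 17, 7, 9, 11, 13, 14, 16] ∈ S_17`, the
descent-generating polynomial of the lower weak-order interval equals
`3t⁸ + 86t⁷ + 658t⁶ + 1946t⁵ + 2534t⁴ + 1420t³ + 336t² + 32t + 1`, which is not
real-rooted. In particular, some `π ∈ S_17` has a non-real-rooted lower weak-order
descent-generating polynomial. -/
theorem weakDesPoly_pi17 :
    weakDesPoly pi17 =
      C 3 * X ^ 8 + C 86 * X ^ 7 + C 658 * X ^ 6 + C 1946 * X ^ 5 + C 2534 * X ^ 4 +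
        C 1420 * X ^ 3 + C 336 * X ^ 2 + C 32 * X + 1 ∧
    ¬ RealRooted (C 3 * X ^ 8 + C 86 * X ^ 7 + C 658 * X ^ 6 + C 1946 * X ^ 5 +
        C 2534 * X ^ 4 + C 1420 * X ^ 3 + C 336 * X ^ 2 + C 32 * X + 1) ∧
    ∃ π : Equiv.Perm (Fin 17), ¬ RealRooted (weakDesPoly π) := by
  have hpi17 := weakDesPoly_pi17_eq
  exact ⟨hpi17, not_realRooted_pi17, pi17, hpi17 ▸ not_realRooted_pi17⟩
end

section
/- For the permutation π = [4, 1, 5, 6, 8, 2, 3, 7] ∈ S_8, the excedance-generating polynomial of the lower Bruhat interval, Σ_{σ ≤_B π} t^{exc(σ)}, equals 1 + 21t + 140t² + 290t³ + 127t⁴ + 5t⁵, and this polynomial is not real-rooted (it has non-real complex roots). -/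
open Polynomial

/-- The number of inversions of a permutation: pairs of positions `i < j` with `σ i > σ j`. -/
def invCount {n : ℕ} (σ : Equiv.Perm (Fin n)) : ℕ :=
  (Finset.univ.filter fun p : Fin n × Fin n => p.1 < p.2 ∧ σ p.2 < σ p.1).card

/-- One step in the Bruhat order: `τ` is obtained from `σ` by swapping two (not
necessarily adjacent) entries in one-line notation, strictly increasing the number
of inversions. -/
def BruhatStep {n : ℕ} (σ τ : Equiv.Perm (Fin n)) : Prop :=
  (∃ i j : Fin n, i ≠ j ∧ τ = σ * Equiv.swap i j) ∧ invCount σ < invCount τ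

/-- The Bruhat order: `σ ≤_B π` iff there is a chain from `σ` to `π` of swaps, each
strictly increasing the number of inversions. -/
def BruhatLE {n : ℕ} (σ π : Equiv.Perm (Fin n)) : Prop :=
  Relation.ReflTransGen BruhatStep σ π

/-- The number of excedances of a permutation: positions `i` with `σ_i > i`. -/
def excCount {n : ℕ} (σ : Equiv.Perm (Fin n)) : ℕ :=
  (Finset.univ.filter fun i : Fin n => i < σ i).card

open scoped Classical in
/-- The excedance-generating polynomial `Σ_{σ ≤_B π} t^{exc(σ)}` of the lower Bruhat
interval `[id, π]_B`. -/
noncomputable def bruhatExcPoly {n : ℕ} (π : Equiv.Perm (Fin n)) : Polynomial ℝ :=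
  ∑ σ : Equiv.Perm (Fin n), if BruhatLE σ π then X ^ excCount σ else 0

/-- The permutation `π = [4, 1, 5, 6, 8, 2, 3, 7] ∈ S_8` (in 0-based form). -/
noncomputable def pi8 : Equiv.Perm (Fin 8) :=
  Equiv.ofBijective ![3, 0, 4, 5, 7, 1, 2, 6] (by decide)

/-!
A Bruhat step moves a larger value to an earlier position, so `σ ≤_B π` forces every dot of `σ`
into the right hull of `π`: weakly to the upper right of some dot of `π` and weakly to the lower
left of some dot of `π`. Conversely, if every `σ ≠ π` in the hull admits a Bruhat step up that stays
in the hull, then climbing such steps must end at `π`, and the interval below `π` is the set of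
permutations supported on the hull. For `pi8` the hull has 584 transversals, few enough to check
this exchange property and to count excedances one by one.

A real-rooted `p` satisfies Laguerre's inequality `p x * p'' x ≤ p' x ^ 2`, which fails for the
excedance polynomial at `x = -1/10`.
-/

section Bruhat

open Equiv Finset

variable {n : ℕ}

theorem apply_swap_lt_apply_swap {α β : Type*} [DecidableEq α] [Preorder β] {f : α → β}
    {i j x y : α} (hf : f i < f j) (hx : x ≠ j) (hy : y ≠ i) (hyx : f y < f x) :
    f (swap i j y) < f (swap i j x) :=
  calc
    f (swap i j y) ≤ f y := by
      rcases eq_or_ne y j with rfl | hyj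
      · simpa using hf.le
      · rw [swap_apply_of_ne_of_ne hy hyj]
    _ < f x := hyx
    _ ≤ f (swap i j x) := by
      rcases eq_or_ne x i with rfl | hxi
      · simpa using hf.le
      · rw [swap_apply_of_ne_of_ne hxi hx]

theorem invCount_mul_swap (σ : Perm (Fin n)) (i j : Fin n) :
    invCount (σ * swap i j) =
      #{p : Fin n × Fin n | swap i j p.1 < swap i j p.2 ∧ σ p.2 < σ p.1} := by
  rw [invCount]
  refine card_equiv ((swap i j).prodCongr (swap i j)) fun p => ?_
  rw [mem_filter, mem_filter]
  simp

theorem invCount_lt_invCount_mul_swap {σ : Perm (Fin n)} {i j : Fin n} (hij : i < j)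
    (hσ : σ i < σ j) : invCount σ < invCount (σ * swap i j) := by
  -- Applying `swap i j` to both positions sends pairs counted only on the left to pairs counted
  -- only on the right, and misses the pair `(j, i)`.
  rw [invCount_mul_swap, invCount, ← card_sdiff_lt_card_sdiff_iff,
    ← card_map ((swap i j).prodCongr (swap i j)).toEmbedding]
  refine card_lt_card <| (ssubset_iff_of_subset fun p hp => ?_).mpr ⟨(j, i), ?_, ?_⟩
  · obtain ⟨⟨x, y⟩, hxy, rfl⟩ := mem_map.mp hp
    simp only [mem_sdiff, mem_filter, mem_univ, true_and] at hxy
    obtain ⟨⟨hlt, hσlt⟩, hswap⟩ := hxy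
    have hx : x ≠ j := by
      rintro rfl
      have hy : swap i x y = y := swap_apply_of_ne_of_ne (hij.trans hlt).ne' hlt.ne'
      exact hswap ⟨by simpa [hy] using hij.trans hlt, hσlt⟩
    have hy : y ≠ i := by
      rintro rfl
      have hx : swap y j x = x := swap_apply_of_ne_of_ne hlt.ne hx
      exact hswap ⟨by simpa [hx] using hlt.trans hij, hσlt⟩
    have hσswap := apply_swap_lt_apply_swap hσ hx hy hσlt
    simpa [hlt, hσlt, hσswap] using fun h => hswap ⟨h, hσlt⟩
  · simp [hij, hσ, hij.le]
  · simp [hσ.le]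

theorem bruhatStep_iff {σ τ : Perm (Fin n)} :
    BruhatStep σ τ ↔ ∃ i j, i < j ∧ σ i < σ j ∧ τ = σ * swap i j := by
  constructor
  · rintro ⟨⟨i, j, hne, rfl⟩, hlt⟩
    wlog hij : i < j generalizing i j
    · rw [swap_comm] at hlt ⊢
      exact this j i hne.symm hlt (hne.lt_or_gt.resolve_left hij)
    refine ⟨i, j, hij, ?_, rfl⟩
    by_contra hσ
    have hlt' : (σ * swap i j) i < (σ * swap i j) j := by
      simpa using (not_lt.mp hσ).lt_of_ne (σ.injective.ne hne.symm)
    have hgt := invCount_lt_invCount_mul_swap hij hlt'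
    rw [mul_assoc, swap_mul_self, mul_one] at hgt
    exact lt_asymm hlt hgt
  · rintro ⟨i, j, hij, hσ, rfl⟩
    exact ⟨⟨i, j, hij.ne, rfl⟩, invCount_lt_invCount_mul_swap hij hσ⟩

theorem BruhatStep.exists_apply_le {σ τ : Perm (Fin n)} (h : BruhatStep σ τ) (k : Fin n) :
    ∃ a ≤ k, σ k ≤ τ a := by
  obtain ⟨i, j, hij, hσ, rfl⟩ := bruhatStep_iff.mp h
  rcases eq_or_ne k i with rfl | hki
  · exact ⟨k, le_rfl, by simpa using hσ.le⟩
  rcases eq_or_ne k j with rfl | hkj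
  · exact ⟨i, hij.le, by simp⟩
  · exact ⟨k, le_rfl, by simp [swap_apply_of_ne_of_ne hki hkj]⟩

theorem BruhatStep.exists_le_apply {σ τ : Perm (Fin n)} (h : BruhatStep σ τ) (k : Fin n) :
    ∃ b ≥ k, τ b ≤ σ k := by
  obtain ⟨i, j, hij, hσ, rfl⟩ := bruhatStep_iff.mp h
  rcases eq_or_ne k i with rfl | hki
  · exact ⟨j, hij.le, by simp⟩
  rcases eq_or_ne k j with rfl | hkj
  · exact ⟨k, le_rfl, by simpa using hσ.le⟩
  · exact ⟨k, le_rfl, by simp [swap_apply_of_ne_of_ne hki hkj]⟩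

theorem BruhatLE.exists_apply_le {σ π : Perm (Fin n)} (h : BruhatLE σ π) (k : Fin n) :
    ∃ a ≤ k, σ k ≤ π a := by
  induction h with
  | refl => exact ⟨k, le_rfl, le_rfl⟩
  | tail _ hstep ih =>
    obtain ⟨a, hak, ha⟩ := ih
    obtain ⟨b, hba, hb⟩ := hstep.exists_apply_le a
    exact ⟨b, hba.trans hak, ha.trans hb⟩

theorem BruhatLE.exists_le_apply {σ π : Perm (Fin n)} (h : BruhatLE σ π) (k : Fin n) :
    ∃ b ≥ k, π b ≤ σ k := by
  induction h with
  | refl => exact ⟨k, le_rfl, le_rfl⟩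
  | tail _ hstep ih =>
    obtain ⟨a, hka, ha⟩ := ih
    obtain ⟨b, hab, hb⟩ := hstep.exists_le_apply a
    exact ⟨b, hka.trans hab, hb.trans ha⟩

theorem bruhatLE_of_forall_exists_bruhatStep {P : Perm (Fin n) → Prop} {π : Perm (Fin n)}
    (hP : ∀ σ, P σ → σ ≠ π → ∃ τ, BruhatStep σ τ ∧ P τ) {σ : Perm (Fin n)} (hσ : P σ) :
    BruhatLE σ π := by
  induction σ using (Finite.wellFounded_of_trans_of_irrefl
    fun τ σ : Perm (Fin n) => invCount σ < invCount τ).induction with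
  | _ σ ih =>
    by_cases hne : σ = π
    · exact hne ▸ Relation.ReflTransGen.refl
    · obtain ⟨τ, hστ, hτ⟩ := hP σ hσ hne
      exact .head hστ (ih τ hστ.2 hτ)

/-- The right hull of `π`, with the dots of `π` drawn in row `i` and column `π i`: `rightHull π i`
lists the columns `v` for which `(i, v)` lies weakly to the lower left of some dot of `π` and weakly
to the upper right of some dot of `π`. Rows are lists so that the permutations in the hull can be
enumerated. -/
def rightHull (π : Perm (Fin n)) (i : Fin n) : List (Fin n) :=
  (List.finRange n).filter fun v => (∃ a ≤ i, v ≤ π a) ∧ ∃ b ≥ i, π b ≤ v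

theorem mem_rightHull {π : Perm (Fin n)} {i v : Fin n} :
    v ∈ rightHull π i ↔ (∃ a ≤ i, v ≤ π a) ∧ ∃ b ≥ i, π b ≤ v := by
  simp [rightHull]

theorem nodup_rightHull (π : Perm (Fin n)) (i : Fin n) : (rightHull π i).Nodup :=
  (List.nodup_finRange n).filter _

theorem BruhatLE.apply_mem_rightHull {σ π : Perm (Fin n)} (h : BruhatLE σ π) (i : Fin n) :
    σ i ∈ rightHull π i :=
  mem_rightHull.mpr ⟨h.exists_apply_le i, h.exists_le_apply i⟩

theorem bruhatLE_iff_forall_apply_mem_rightHull {π : Perm (Fin n)}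
    (hπ : ∀ σ : Perm (Fin n), (∀ k, σ k ∈ rightHull π k) → σ ≠ π →
      ∃ i j, i < j ∧ σ i < σ j ∧ σ j ∈ rightHull π i ∧ σ i ∈ rightHull π j)
    {σ : Perm (Fin n)} : BruhatLE σ π ↔ ∀ k, σ k ∈ rightHull π k := by
  refine ⟨BruhatLE.apply_mem_rightHull, ?_⟩
  refine bruhatLE_of_forall_exists_bruhatStep (P := fun σ => ∀ k, σ k ∈ rightHull π k)
    fun σ hσ hne => ?_
  obtain ⟨i, j, hij, hlt, hi, hj⟩ := hπ σ hσ hne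
  refine ⟨σ * swap i j, bruhatStep_iff.mpr ⟨i, j, hij, hlt, rfl⟩, fun k => ?_⟩
  rcases eq_or_ne k i with rfl | hki
  · simpa using hi
  rcases eq_or_ne k j with rfl | hkj
  · simpa using hj
  · simpa [swap_apply_of_ne_of_ne hki hkj] using hσ k

end Bruhat

section Transversals

variable {α : Type*} [DecidableEq α]

/-- The transversals of the rows `B 0, …, B (n - 1)`: all words `[f 0, …, f (n - 1)]` with pairwise
distinct letters `f i ∈ B i`. They enumerate the permutations whose values are restricted to `B`. -/
def transversals : {n : ℕ} → (Fin n → List α) → List (List α)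
  | 0, _ => [[]]
  | _ + 1, B => (transversals (Fin.tail B)).flatMap fun w =>
      ((B 0).filter (· ∉ w)).map (· :: w)

theorem mem_transversals {n : ℕ} {B : Fin n → List α} {w : List α} :
    w ∈ transversals B ↔ ∃ f : Fin n → α, f.Injective ∧ (∀ i, f i ∈ B i) ∧ List.ofFn f = w := by
  induction n generalizing w with
  | zero => simp [transversals, Function.injective_of_subsingleton, eq_comm]
  | succ n ih =>
    simp only [transversals, ih, List.mem_flatMap, List.mem_map, List.mem_filter, decide_eq_true_eq]
    constructor
    · rintro ⟨_, ⟨f, hf, hfB, rfl⟩, v, ⟨hv, hvf⟩, rfl⟩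
      refine ⟨Fin.cons v f, Fin.cons_injective_iff.mpr ⟨?_, hf⟩, Fin.cases hv hfB, by simp⟩
      simpa [List.mem_ofFn] using hvf
    · rintro ⟨f, hf, hfB, rfl⟩
      refine ⟨List.ofFn (Fin.tail f), ⟨Fin.tail f, hf.comp (Fin.succ_injective n),
        fun i => hfB i.succ, rfl⟩, f 0, ⟨hfB 0, ?_⟩, by rw [List.ofFn_succ]; rfl⟩
      simp [Fin.tail, List.mem_ofFn, hf.eq_iff]

theorem nodup_transversals {n : ℕ} {B : Fin n → List α} (hB : ∀ i, (B i).Nodup) :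
    (transversals B).Nodup := by
  induction n with
  | zero => simp [transversals]
  | succ n ih =>
    refine List.nodup_flatMap.mpr ⟨fun w _ => ?_, (ih fun i => hB i.succ).imp fun {w w'} hne => ?_⟩
    · exact ((hB 0).filter _).map fun v v' h => (List.cons.inj h).1
    · simp only [Function.onFun, List.disjoint_left, List.mem_map]
      rintro _ ⟨v, _, rfl⟩ ⟨v', _, h⟩
      exact hne (List.cons.inj h).2.symm

theorem sum_filter_forall_apply_mem {M : Type*} [AddCommMonoid M] {n : ℕ}
    {B : Fin n → List (Fin n)} (hB : ∀ i, (B i).Nodup) (g : List (Fin n) → M) :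
    ∑ σ : Equiv.Perm (Fin n) with ∀ i, σ i ∈ B i, g (List.ofFn σ) =
      ((transversals B).map g).sum := by
  rw [← List.sum_toFinset g (nodup_transversals hB)]
  refine Finset.sum_nbij (fun σ => List.ofFn σ) (fun σ hσ => ?_)
    (List.ofFn_injective.comp DFunLike.coe_injective).injOn (fun w hw => ?_) fun _ _ => rfl
  · exact List.mem_toFinset.mpr <|
      mem_transversals.mpr ⟨σ, σ.injective, (Finset.mem_filter.mp hσ).2, rfl⟩
  · obtain ⟨f, hf, hfB, rfl⟩ := mem_transversals.mp (List.mem_toFinset.mp hw)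
    exact ⟨.ofBijective f (Finite.injective_iff_bijective.mp hf), by simpa using hfB, rfl⟩

end Transversals

section Excedances

/-- The number of excedances of the permutation with one-line notation `w`, in a form that the
kernel evaluates quickly. -/
def listExcCount {n : ℕ} (w : List (Fin n)) : ℕ :=
  ((List.finRange n).zip w).countP fun p => p.1 < p.2

theorem zip_finRange_ofFn {n : ℕ} {α : Type*} (f : Fin n → α) :
    (List.finRange n).zip (List.ofFn f) = (List.finRange n).map fun i => (i, f i) := by
  rw [List.ofFn_eq_map, List.map_prod_left_eq_zip]

theorem listExcCount_ofFn {n : ℕ} (σ : Equiv.Perm (Fin n)) :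
    listExcCount (List.ofFn σ) = excCount σ := by
  rw [listExcCount, zip_finRange_ofFn, List.countP_map, excCount, ← List.toFinset_finRange]
  exact ((List.nodup_finRange n).card_eq_countP (P := fun i => i < σ i)).symm

theorem bruhatExcPoly_eq_sum_transversals_rightHull {n : ℕ} {π : Equiv.Perm (Fin n)}
    (hπ : ∀ σ, BruhatLE σ π ↔ ∀ k, σ k ∈ rightHull π k) :
    bruhatExcPoly π = (((transversals (rightHull π)).map listExcCount).map (X ^ ·)).sum := by
  classical
  calc
    bruhatExcPoly π =
        ∑ σ : Equiv.Perm (Fin n) with ∀ k, σ k ∈ rightHull π k, X ^ listExcCount (List.ofFn σ) := by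
      simp only [bruhatExcPoly, hπ, listExcCount_ofFn, Finset.sum_filter]
    _ = ((transversals (rightHull π)).map fun w => X ^ listExcCount w).sum :=
      sum_filter_forall_apply_mem (nodup_rightHull π) fun w => X ^ listExcCount w
    _ = (((transversals (rightHull π)).map listExcCount).map (X ^ ·)).sum :=
      congrArg List.sum List.map_map.symm

end Excedances

section Laguerre

theorem eval_mul_eval_derivative_derivative_le_sq_of_splits {R : Type*} [CommRing R]
    [LinearOrder R] [IsStrictOrderedRing R] {p : R[X]} (hp : p.Splits) (x : R) :
    p.eval x * p.derivative.derivative.eval x ≤ p.derivative.eval x ^ 2 := by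
  induction hp using Submonoid.closure_induction with
  | mem p hp => rcases hp with ⟨a, rfl⟩ | ⟨a, rfl⟩ <;> simp
  | one => simp
  | mul f g _ _ hf hg =>
    simp only [derivative_mul, derivative_add, eval_add, eval_mul]
    linear_combination eval x g ^ 2 * hf + eval x f ^ 2 * hg

theorem RealRooted.splits {p : ℝ[X]} (hp : RealRooted p) : p.Splits := by
  refine (IsAlgClosed.splits (p.map (algebraMap ℝ ℂ))).of_splits_map _ fun z hz => ?_
  have hz : aeval z p = 0 := (mem_aroots.mp hz).2
  exact ⟨z.re, Complex.ext rfl (hp.2 z hz).symm⟩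

end Laguerre

section Pi8

theorem rightHull_pi8 : rightHull pi8 = ![[0, 1, 2, 3], [0, 1, 2, 3], [1, 2, 3, 4], [1, 2, 3, 4, 5],
    [1, 2, 3, 4, 5, 6, 7], [1, 2, 3, 4, 5, 6, 7], [2, 3, 4, 5, 6, 7], [6, 7]] := by
  decide +kernel

theorem eq_pi8_or_exists_exchange_of_mem_transversals :
    ∀ w ∈ transversals (rightHull pi8), w = List.ofFn pi8 ∨
      ∃ p ∈ (List.finRange 8).zip w, ∃ q ∈ (List.finRange 8).zip w, p.1 < q.1 ∧ p.2 < q.2 ∧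
        q.2 ∈ rightHull pi8 p.1 ∧ p.2 ∈ rightHull pi8 q.1 := by
  rw [rightHull_pi8]
  decide +kernel

theorem bruhatLE_pi8_iff (σ : Equiv.Perm (Fin 8)) :
    BruhatLE σ pi8 ↔ ∀ k, σ k ∈ rightHull pi8 k := by
  refine bruhatLE_iff_forall_apply_mem_rightHull fun σ hσ hne => ?_
  have hexchange := eq_pi8_or_exists_exchange_of_mem_transversals (List.ofFn σ) <|
    mem_transversals.mpr ⟨σ, σ.injective, hσ, rfl⟩
  simpa only [List.ofFn_inj, DFunLike.coe_fn_eq, hne, false_or, zip_finRange_ofFn, List.mem_map,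
    List.mem_finRange, true_and, exists_exists_eq_and] using hexchange

theorem map_listExcCount_transversals_rightHull_pi8_perm :
    ((transversals (rightHull pi8)).map listExcCount).Perm
      (.replicate 1 0 ++ .replicate 21 1 ++ .replicate 140 2 ++ .replicate 290 3 ++
        .replicate 127 4 ++ .replicate 5 5) := by
  rw [rightHull_pi8]
  decide +kernel

end Pi8

/-- For `π = [4, 1, 5, 6, 8, 2, 3, 7] ∈ S_8`, the excedance-generating polynomial of the
lower Bruhat interval equals `1 + 21t + 140t² + 290t³ + 127t⁴ + 5t⁵`, and it is not
real-rooted. -/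
theorem bruhatExcPoly_pi8 :
    bruhatExcPoly pi8 =
      1 + C 21 * X + C 140 * X ^ 2 + C 290 * X ^ 3 + C 127 * X ^ 4 + C 5 * X ^ 5 ∧
    ¬ RealRooted (1 + C 21 * X + C 140 * X ^ 2 + C 290 * X ^ 3 + C 127 * X ^ 4 +
        C 5 * X ^ 5) := by
  refine ⟨?_, fun hroots => ?_⟩
  · rw [bruhatExcPoly_eq_sum_transversals_rightHull bruhatLE_pi8_iff,
      (map_listExcCount_transversals_rightHull_pi8_perm.map (X ^ ·)).sum_eq]
    simp only [List.map_append, List.map_replicate, List.sum_append, List.sum_replicate,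
      nsmul_eq_mul, pow_zero, pow_one, mul_one, Nat.cast_one, Nat.cast_ofNat, map_ofNat]
  · have laguerre :=
      eval_mul_eval_derivative_derivative_le_sq_of_splits hroots.splits (-1 / 10)
    norm_num at laguerre
end
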